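/- Let G be a finitely generated amenable group, with finite symmetric generating set S and word length |·|, which admits a controlled Følner sequence. Let π: G → O(H) be an orthogonal representation on a real Hilbert space H and let b: G → H be a 1-cocycle for π. Suppose that for every ξ ∈ H and every Reiter sequence (μ_n) on G one has ∑_{g ∈ G} μ_n(g) · (1/|g|) · ⟨b(g⁻¹), ξ⟩ → 0 as n → ∞. Then the affine isometric action T_g(ξ) = π_g(ξ) + b(g) admits a sequence of almost fixed points. -/

import Mathlib

/-!
The idea is that the averaging hypothesis, being assumed for *every* Reiter sequence, forces
`b g / |g| → 0` weakly as `g → ∞`. Indeed, for fixed `ξ` the function `f h = ⟪b h⁻¹, ξ⟫ / |h|` is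
bounded, and the cocycle identity gives `f (g h) - f h → 0` as `h → ∞`
(`IsCocycle.tendsto_quotient_sub`). If `f` did not vanish at infinity, a Reiter sequence could be
translated on the right by elements escaping fast to infinity along which `f` stays away from `0`;
the translates form a Reiter sequence whose averages of `f` do not tend to `0`
(`tendsto_cofinite_of_reiter`).

Let `ξ_n` be the average of `b` over the controlled Følner set `F_n`. For a generator `s`, the
displacement `T_s ξ_n - ξ_n` is `1 / |F_n|` times a signed sum of `b` over `s F_n Δ F_n`, where
word lengths are at most `diam F_n + 1`. As `|⟪b g, η⟫| ≤ ε |g| + D_ε`, the control condition gives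
`limsup |⟪T_s ξ_n - ξ_n, η⟫| ≤ ε K` for all `ε > 0`, that is, `T_s ξ_n - ξ_n → 0` weakly
(`IsCocycle.tendsto_inner_displacement`). Since displacements of all generators together form a
convex set, Hahn–Banach separation upgrades weak to norm approximation
(`exists_small_displacement`), and almost fixed points for the generators are almost fixed for `G`.
-/

open Filter Topology
open scoped RealInnerProductSpace

noncomputable section

/-- The word length of `g` with respect to a generating set `S`
(`sInf` of lengths of words in `S` representing `g`). -/
def wordLength {G : Type*} [Group G] (S : Finset G) (g : G) : ℕ :=
  sInf {n | ∃ l : List G, l.length = n ∧ (∀ x ∈ l, x ∈ S) ∧ l.prod = g}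

/-- `S` is a finite symmetric generating set. -/
def IsSymmGen {G : Type*} [Group G] (S : Finset G) : Prop :=
  (∀ s ∈ S, s⁻¹ ∈ S) ∧ Subgroup.closure (S : Set G) = ⊤

/-- A Reiter sequence: probability measures `μ n` on `G` with `‖μ n - g ∗ μ n‖₁ → 0`
for every `g ∈ G`. -/
def IsReiterSeq {G : Type*} [Group G] (μ : ℕ → G → ℝ) : Prop :=
  (∀ n g, 0 ≤ μ n g) ∧ (∀ n, Summable (μ n)) ∧ (∀ n, ∑' g, μ n g = 1) ∧
    ∀ g : G, Tendsto (fun n => ∑' h, |μ n h - μ n (g⁻¹ * h)|) atTop (𝓝 0)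

/-- A 1-cocycle for the orthogonal representation `π`. -/
def IsCocycle {G H : Type*} [Group G] [NormedAddCommGroup H] [InnerProductSpace ℝ H]
    (π : G →* (H ≃ₗᵢ[ℝ] H)) (b : G → H) : Prop :=
  ∀ g h : G, b (g * h) = π g (b h) + b g

/-- An orthogonal representation is ergodic if its only invariant vector is `0`. -/
def IsErgodicRep {G H : Type*} [Group G] [NormedAddCommGroup H] [InnerProductSpace ℝ H]
    (π : G →* (H ≃ₗᵢ[ℝ] H)) : Prop :=
  ∀ ξ : H, (∀ g : G, π g ξ = ξ) → ξ = 0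

/-- The boundary `∂F = ⋃ s ∈ S, (sF Δ F)` of a finite subset `F`. -/
def finsetBoundary {G : Type*} [Group G] [DecidableEq G] (S : Finset G) (F : Finset G) :
    Finset G :=
  S.biUnion fun s =>
    ((F.image fun g => s * g) \ F) ∪ (F \ (F.image fun g => s * g))

/-- `diam F`: the least `m` such that `F ⊆ B(m)`. -/
def finsetDiam {G : Type*} [Group G] (S : Finset G) (F : Finset G) : ℕ :=
  sInf {m | ∀ g ∈ F, wordLength S g ≤ m}

/-- A `K`-controlled Følner sequence: a Følner sequence `(F n)` of nonempty finite subsets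
with `|∂F n| / |F n| ≤ K / diam (F n)` for all `n`. -/
def IsControlledFolnerSeq {G : Type*} [Group G] [DecidableEq G] (S : Finset G) (K : ℝ)
    (F : ℕ → Finset G) : Prop :=
  (∀ n, (F n).Nonempty) ∧
  (∀ g : G, Tendsto
    (fun n => (((((F n).image fun h => g * h) \ F n) ∪
      (F n \ ((F n).image fun h => g * h))).card : ℝ) / (F n).card) atTop (𝓝 0)) ∧
  (∀ n, ((finsetBoundary S (F n)).card : ℝ) / (F n).card ≤ K / finsetDiam S (F n))

/-- The uniform probability measure on a finite subset `F ⊆ G`. -/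
def unifMeasure {G : Type*} [Group G] [DecidableEq G] (F : Finset G) (g : G) : ℝ :=
  if g ∈ F then (F.card : ℝ)⁻¹ else 0

/-! ### Word length -/

section WordLength

variable {G : Type*} [Group G] {S : Finset G}

lemma wordLength_le_length {l : List G} (hl : ∀ x ∈ l, x ∈ S) :
    wordLength S l.prod ≤ l.length :=
  Nat.sInf_le ⟨l, rfl, hl, rfl⟩

lemma IsSymmGen.exists_list (hS : IsSymmGen S) (g : G) :
    ∃ l : List G, (∀ x ∈ l, x ∈ S) ∧ l.prod = g := by
  have hg : g ∈ Subgroup.closure (S : Set G) := by simp [hS.2]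
  induction hg using Subgroup.closure_induction with
  | mem x hx => exact ⟨[x], by simpa using hx, by simp⟩
  | one => exact ⟨[], by simp, by simp⟩
  | mul x y _ _ hx hy =>
    obtain ⟨l, hl, rfl⟩ := hx
    obtain ⟨m, hm, rfl⟩ := hy
    refine ⟨l ++ m, fun x hx => ?_, by simp⟩
    rcases List.mem_append.1 hx with h | h
    exacts [hl x h, hm x h]
  | inv x _ hx =>
    obtain ⟨l, hl, rfl⟩ := hx
    refine ⟨(l.map (·⁻¹)).reverse, fun x hx => ?_, (List.prod_inv_reverse l).symm⟩
    simp only [List.mem_reverse, List.mem_map] at hx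
    obtain ⟨y, hy, rfl⟩ := hx
    exact hS.1 y (hl y hy)

lemma IsSymmGen.exists_geodesic (hS : IsSymmGen S) (g : G) :
    ∃ l : List G, l.length = wordLength S g ∧ (∀ x ∈ l, x ∈ S) ∧ l.prod = g := by
  obtain ⟨l, hl, hg⟩ := hS.exists_list g
  exact Nat.sInf_mem (s := {n | ∃ l : List G, l.length = n ∧ (∀ x ∈ l, x ∈ S) ∧ l.prod = g})
    ⟨l.length, l, rfl, hl, hg⟩

lemma IsSymmGen.wordLength_mul_le (hS : IsSymmGen S) (g h : G) :
    wordLength S (g * h) ≤ wordLength S g + wordLength S h := by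
  obtain ⟨l, hl, hlS, hg⟩ := hS.exists_geodesic g
  obtain ⟨m, hm, hmS, hh⟩ := hS.exists_geodesic h
  have := wordLength_le_length (S := S) (l := l ++ m) fun x hx => by
    rcases List.mem_append.1 hx with h | h
    exacts [hlS x h, hmS x h]
  rw [List.prod_append, List.length_append] at this
  rwa [hg, hh, hl, hm] at this

lemma IsSymmGen.wordLength_inv_le (hS : IsSymmGen S) (g : G) :
    wordLength S g⁻¹ ≤ wordLength S g := by
  obtain ⟨l, hl, hlS, hg⟩ := hS.exists_geodesic g
  have := wordLength_le_length (S := S) (l := (l.map (·⁻¹)).reverse) fun x hx => by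
    simp only [List.mem_reverse, List.mem_map] at hx
    obtain ⟨y, hy, rfl⟩ := hx
    exact hS.1 y (hlS y hy)
  rw [← List.prod_inv_reverse, hg] at this
  simpa [hl] using this

lemma IsSymmGen.wordLength_inv (hS : IsSymmGen S) (g : G) :
    wordLength S g⁻¹ = wordLength S g :=
  le_antisymm (hS.wordLength_inv_le g) (by simpa using hS.wordLength_inv_le g⁻¹)

lemma wordLength_le_one {s : G} (hs : s ∈ S) : wordLength S s ≤ 1 := by
  simpa using wordLength_le_length (S := S) (l := [s]) (by simpa using hs)

lemma finite_products_of_length (S : Finset G) (n : ℕ) :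
    {g : G | ∃ l : List G, l.length = n ∧ (∀ x ∈ l, x ∈ S) ∧ l.prod = g}.Finite := by
  induction n with
  | zero =>
    refine (Set.finite_singleton (1 : G)).subset ?_
    rintro g ⟨l, hl, -, rfl⟩
    simp [List.length_eq_zero_iff.1 hl]
  | succ n ih =>
    refine (Set.Finite.image2 (fun x y => x * y) S.finite_toSet ih).subset ?_
    rintro g ⟨l, hl, hlS, rfl⟩
    obtain ⟨x, m, rfl⟩ := List.exists_cons_of_length_eq_add_one hl
    exact ⟨x, hlS x (by simp), m.prod,
      ⟨m, by simpa using hl, fun y hy => hlS y (by simp [hy]), rfl⟩, by simp⟩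

/-- Balls are finite, so word length is a proper function on the discrete group. -/
lemma IsSymmGen.tendsto_wordLength (hS : IsSymmGen S) :
    Tendsto (fun g : G => (wordLength S g : ℝ)) cofinite atTop := by
  refine tendsto_natCast_atTop_atTop.comp ?_
  rw [← Nat.cofinite_eq_atTop]
  refine Tendsto.cofinite_of_finite_preimage_singleton ?_
  intro n
  refine (finite_products_of_length S n).subset fun g hg => ?_
  obtain ⟨l, hl, hlS, hlg⟩ := hS.exists_geodesic g
  exact ⟨l, hl.trans hg, hlS, hlg⟩

lemma wordLength_le_finsetDiam {F : Finset G} {g : G} (hg : g ∈ F) :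
    wordLength S g ≤ finsetDiam S F :=
  Nat.sInf_mem (s := {m | ∀ g ∈ F, wordLength S g ≤ m})
    ⟨F.sup (wordLength S), fun _ h => Finset.le_sup h⟩ g hg

end WordLength

/-! ### Cocycles -/

section Cocycle

variable {G H : Type*} [Group G] [NormedAddCommGroup H] [InnerProductSpace ℝ H] {S : Finset G}
  {π : G →* (H ≃ₗᵢ[ℝ] H)} {b : G → H}

lemma IsCocycle.map_one (hb : IsCocycle π b) : b 1 = 0 := by
  have := hb 1 1
  simpa using this

/-- A cocycle grows at most linearly in the word length. -/
lemma IsCocycle.norm_le (hb : IsCocycle π b) (hS : IsSymmGen S) (g : G) :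
    ‖b g‖ ≤ (∑ s ∈ S, ‖b s‖) * wordLength S g := by
  obtain ⟨l, hl, hlS, rfl⟩ := hS.exists_geodesic g
  rw [← hl]
  clear hl
  induction l with
  | nil => simp [hb.map_one]
  | cons x l ih =>
    have h1 := ih fun y hy => hlS y (by simp [hy])
    have h2 : ‖b x‖ ≤ ∑ s ∈ S, ‖b s‖ :=
      Finset.single_le_sum (f := fun s => ‖b s‖) (fun _ _ => norm_nonneg _) (hlS x (by simp))
    rw [List.prod_cons, hb]
    refine (norm_add_le _ _).trans ?_
    rw [LinearIsometryEquiv.norm_map]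
    push_cast [List.length_cons]
    linarith

/-- The quotient `h ↦ ⟪b h⁻¹, ξ⟫ / |h|` is asymptotically invariant under left translation. -/
lemma IsCocycle.tendsto_quotient_sub (hb : IsCocycle π b) (hS : IsSymmGen S) (ξ : H) (g : G) :
    Tendsto (fun h => (wordLength S (g * h) : ℝ)⁻¹ * ⟪b (g * h)⁻¹, ξ⟫ -
      (wordLength S h : ℝ)⁻¹ * ⟪b h⁻¹, ξ⟫) cofinite (𝓝 0) := by
  have hgh : Tendsto (fun h => (wordLength S (g * h) : ℝ)) cofinite atTop :=
    hS.tendsto_wordLength.comp (mul_right_injective g).tendsto_cofinite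
  set C := ∑ s ∈ S, ‖b s‖ with hC
  have hC0 : 0 ≤ C := Finset.sum_nonneg fun _ _ => norm_nonneg _
  have hlim : Tendsto (fun h => (‖b g⁻¹‖ * ‖ξ‖ + C * ‖ξ‖ * wordLength S g) *
      (wordLength S (g * h) : ℝ)⁻¹) cofinite (𝓝 0) := by
    simpa using (tendsto_inv_atTop_zero.comp hgh).const_mul
      (‖b g⁻¹‖ * ‖ξ‖ + C * ‖ξ‖ * wordLength S g)
  refine squeeze_zero_norm' ?_ hlim
  filter_upwards [hgh.eventually_gt_atTop 0, hS.tendsto_wordLength.eventually_gt_atTop 0]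
    with h h1 h2
  have e1 : |⟪b (g * h)⁻¹, ξ⟫ - ⟪b h⁻¹, ξ⟫| ≤ ‖b g⁻¹‖ * ‖ξ‖ := by
    rw [← inner_sub_left, mul_inv_rev, hb, add_sub_cancel_right]
    simpa using abs_real_inner_le_norm (π h⁻¹ (b g⁻¹)) ξ
  have e2 : |⟪b h⁻¹, ξ⟫| ≤ C * wordLength S h * ‖ξ‖ := by
    refine (abs_real_inner_le_norm _ _).trans ?_
    have := hb.norm_le hS h⁻¹
    rw [hS.wordLength_inv] at this
    gcongr
  have e3 : |(wordLength S h : ℝ) - wordLength S (g * h)| ≤ wordLength S g := by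
    have a1 := hS.wordLength_mul_le g h
    have a2 := hS.wordLength_mul_le g⁻¹ (g * h)
    rw [inv_mul_cancel_left, hS.wordLength_inv] at a2
    rw [abs_le]
    have a1' : (wordLength S (g * h) : ℝ) ≤ wordLength S g + wordLength S h := by
      exact_mod_cast a1
    have a2' : (wordLength S h : ℝ) ≤ wordLength S g + wordLength S (g * h) := by
      exact_mod_cast a2
    constructor <;> linarith
  set p : ℝ := (wordLength S (g * h) : ℝ)
  set q : ℝ := (wordLength S h : ℝ)
  set x : ℝ := ⟪b (g * h)⁻¹, ξ⟫
  set y : ℝ := ⟪b h⁻¹, ξ⟫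
  have key : p⁻¹ * x - q⁻¹ * y = ((x - y) + (y * q⁻¹) * (q - p)) * p⁻¹ := by
    field_simp
    ring
  have e4 : |y * q⁻¹| ≤ C * ‖ξ‖ := by
    rw [abs_mul, abs_of_pos (inv_pos.2 h2), ← div_eq_mul_inv, div_le_iff₀ h2]
    linarith
  rw [Real.norm_eq_abs, key, abs_mul, abs_of_pos (inv_pos.2 h1)]
  gcongr
  refine (abs_add_le _ _).trans ?_
  rw [abs_mul (y * q⁻¹)]
  gcongr

lemma IsCocycle.abs_quotient_le (hb : IsCocycle π b) (hS : IsSymmGen S) (ξ : H) (h : G) :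
    |(wordLength S h : ℝ)⁻¹ * ⟪b h⁻¹, ξ⟫| ≤ (∑ s ∈ S, ‖b s‖) * ‖ξ‖ := by
  have hC0 : 0 ≤ ∑ s ∈ S, ‖b s‖ := Finset.sum_nonneg fun _ _ => norm_nonneg _
  have h1 := hb.norm_le hS h⁻¹
  rw [hS.wordLength_inv] at h1
  rcases (Nat.cast_nonneg (α := ℝ) (wordLength S h)).eq_or_lt with h0 | h0
  · rw [← h0]
    simp only [inv_zero, zero_mul, abs_zero]
    positivity
  · rw [abs_mul, abs_of_pos (inv_pos.2 h0), mul_comm, ← div_eq_mul_inv, div_le_iff₀ h0]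
    refine (abs_real_inner_le_norm _ _).trans ?_
    nlinarith [norm_nonneg ξ]

end Cocycle

/-! ### Averaging along Reiter sequences -/

lemma IsReiterSeq.translate_right {G : Type*} [Group G] {μ : ℕ → G → ℝ} (hμ : IsReiterSeq μ)
    (k : ℕ → G) : IsReiterSeq fun n g => μ n (g * k n) := by
  obtain ⟨h1, h2, h3, h4⟩ := hμ
  refine ⟨fun n g => h1 _ _, fun n => (Equiv.mulRight (k n)).summable_iff.2 (h2 n), fun n => ?_,
    fun g => (h4 g).congr fun n => ?_⟩
  · exact ((Equiv.mulRight (k n)).tsum_eq (μ n)).trans (h3 n)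
  · rw [← (Equiv.mulRight (k n)).tsum_eq]
    simp [mul_assoc]

/-- If a bounded function is asymptotically left invariant at infinity and averages to zero along
every Reiter sequence, then it vanishes at infinity. Otherwise it stays away from `0` along a
sequence `k n` escaping to infinity as fast as desired, and the right translates of a given Reiter
sequence by `k n` form a Reiter sequence with averages close to the values at `k n`. -/
lemma tendsto_cofinite_of_reiter {G : Type*} [Group G] [Countable G] {f : G → ℝ} {C : ℝ}
    (hC : ∀ g, |f g| ≤ C) (hinv : ∀ g, Tendsto (fun h => f (g * h) - f h) cofinite (𝓝 0))
    (hamen : ∃ μ : ℕ → G → ℝ, IsReiterSeq μ)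
    (havg : ∀ μ : ℕ → G → ℝ, IsReiterSeq μ →
      Tendsto (fun n => ∑' g : G, μ n g * f g) atTop (𝓝 0)) :
    Tendsto f cofinite (𝓝 0) := by
  obtain ⟨μ, hμ⟩ := hamen
  have hμ' := hμ
  obtain ⟨h1, h2, h3, -⟩ := hμ'
  have hsum : ∀ n h, Summable fun g => μ n g * f (g * h) := fun n h =>
    ((h2 n).mul_right C).of_norm_bounded fun g => by
      rw [norm_mul, Real.norm_of_nonneg (h1 n g)]
      exact mul_le_mul_of_nonneg_left (hC _) (h1 n g)
  have hdiff : ∀ n, Tendsto (fun h => ∑' g, μ n g * f (g * h) - f h) cofinite (𝓝 0) := by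
    intro n
    have : Tendsto (fun h => ∑' g, μ n g * (f (g * h) - f h)) cofinite (𝓝 (∑' _ : G, 0)) := by
      refine tendsto_tsum_of_dominated_convergence (bound := fun g => μ n g * (C + C))
        ((h2 n).mul_right _) (fun g => ?_) (Eventually.of_forall fun h g => ?_)
      · simpa using (hinv g).const_mul (μ n g)
      · rw [norm_mul, Real.norm_of_nonneg (h1 n g)]
        refine mul_le_mul_of_nonneg_left ((norm_sub_le _ _).trans ?_) (h1 n g)
        exact add_le_add (hC _) (hC _)
    rw [tsum_zero] at this
    refine this.congr fun h => ?_
    simp_rw [mul_sub]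
    rw [(hsum n h).tsum_sub ((h2 n).mul_right _), tsum_mul_right, h3, one_mul]
  rw [Metric.tendsto_nhds]
  by_contra! hcon
  obtain ⟨ε, hε, hfreq⟩ := hcon
  have hk : ∀ n, ∃ k, ε ≤ |f k| ∧ |∑' g, μ n g * f (g * k) - f k| < ε / 2 := by
    intro n
    have h5 := (Metric.tendsto_nhds.1 (hdiff n)) (ε / 2) (by positivity)
    obtain ⟨k, hk1, hk2⟩ := ((not_eventually.1 hfreq).and_eventually h5).exists
    exact ⟨k, by simpa using hk1, by simpa using hk2⟩
  choose k hk1 hk2 using hk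
  have hlim := havg _ (hμ.translate_right fun n => (k n)⁻¹)
  obtain ⟨n, hn⟩ := ((Metric.tendsto_nhds.1 hlim) (ε / 2) (by positivity)).exists
  rw [← (Equiv.mulRight (k n)).tsum_eq] at hn
  simp only [Equiv.coe_mulRight, mul_inv_cancel_right, dist_zero_right, Real.norm_eq_abs] at hn
  have := hk1 n
  have h6 := hk2 n
  have h7 := abs_sub_abs_le_abs_sub (f (k n)) (∑' g, μ n g * f (g * k n))
  rw [abs_sub_comm] at h7
  linarith

/-! ### Averages over controlled Følner sets -/

section Averages

variable {G H : Type*} [Group G] [DecidableEq G] [NormedAddCommGroup H] [InnerProductSpace ℝ H]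
  {S : Finset G} {π : G →* (H ≃ₗᵢ[ℝ] H)} {b : G → H}

/-- The displacement of the barycentre of `b` over `F` under the affine action is a boundary term:
`T_s (avg_F b) = avg_F (b (s ·))`, and the sums over `s F` and `F` differ on the boundary only. -/
lemma IsCocycle.abs_inner_displacement_le (hb : IsCocycle π b) (hS : IsSymmGen S)
    {F : Finset G} (hF : F.Nonempty) {s : G} (hs : s ∈ S) {η : H} {ε D : ℝ} (hε : 0 ≤ ε)
    (hbd : ∀ g, |⟪η, b g⟫| ≤ ε * wordLength S g + D) :
    |⟪η, π s ((F.card : ℝ)⁻¹ • ∑ g ∈ F, b g) + b s - (F.card : ℝ)⁻¹ • ∑ g ∈ F, b g⟫| ≤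
      ((((F.image fun h => s * h) \ F) ∪ (F \ (F.image fun h => s * h))).card : ℝ) / F.card *
        (ε * finsetDiam S F + (ε + D)) := by
  set F' := F.image fun h => s * h with hF'
  have hc : (0 : ℝ) < F.card := by exact_mod_cast hF.card_pos
  have e1 : π s ((F.card : ℝ)⁻¹ • ∑ g ∈ F, b g) + b s = (F.card : ℝ)⁻¹ • ∑ g ∈ F', b g := by
    rw [hF', Finset.sum_image fun x _ y _ h => mul_left_cancel h]
    simp only [hb s, Finset.sum_add_distrib, Finset.sum_const, map_smul, map_sum, smul_add]
    rw [← Nat.cast_smul_eq_nsmul ℝ, smul_smul, inv_mul_cancel₀ hc.ne', one_smul]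
  have e2 : ∑ g ∈ F', b g - ∑ g ∈ F, b g = ∑ g ∈ F' \ F, b g - ∑ g ∈ F \ F', b g :=
    Finset.sum_sdiff_sub_sum_sdiff.symm
  have hlen : ∀ g ∈ (F' \ F) ∪ (F \ F'), |⟪η, b g⟫| ≤ ε * finsetDiam S F + (ε + D) := by
    intro g hg
    have h1 : (wordLength S g : ℝ) ≤ finsetDiam S F + 1 := by
      have : wordLength S g ≤ finsetDiam S F + 1 := by
        rcases Finset.mem_union.1 hg with h | h
        · obtain ⟨x, hx, rfl⟩ := Finset.mem_image.1 (Finset.mem_sdiff.1 h).1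
          have a1 := hS.wordLength_mul_le s x
          have a2 := wordLength_le_one hs
          have a3 := wordLength_le_finsetDiam (S := S) hx
          omega
        · have a3 := wordLength_le_finsetDiam (S := S) (Finset.mem_sdiff.1 h).1
          omega
      exact_mod_cast this
    nlinarith [hbd g]
  have hdisj : Disjoint (F' \ F) (F \ F') := disjoint_sdiff_sdiff
  rw [e1, ← smul_sub, e2, inner_smul_right, inner_sub_right, inner_sum, inner_sum, abs_mul,
    abs_of_pos (inv_pos.2 hc), div_mul_eq_mul_div, div_eq_inv_mul]
  gcongr
  calc |∑ g ∈ F' \ F, ⟪η, b g⟫ - ∑ g ∈ F \ F', ⟪η, b g⟫|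
      ≤ ∑ g ∈ F' \ F, |⟪η, b g⟫| + ∑ g ∈ F \ F', |⟪η, b g⟫| :=
        (abs_sub _ _).trans
          (add_le_add (Finset.abs_sum_le_sum_abs _ _) (Finset.abs_sum_le_sum_abs _ _))
    _ = ∑ g ∈ (F' \ F) ∪ (F \ F'), |⟪η, b g⟫| := (Finset.sum_union hdisj).symm
    _ ≤ _ := by
      rw [← nsmul_eq_mul]
      exact Finset.sum_le_card_nsmul _ _ _ hlen

/-- If `b g / |g|` tends weakly to `0` at infinity, the barycentres of `b` over controlled Følner
sets are weakly almost fixed. -/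
lemma IsCocycle.tendsto_inner_displacement (hb : IsCocycle π b) (hS : IsSymmGen S) {η : H}
    (hη : Tendsto (fun g => (wordLength S g : ℝ)⁻¹ * ⟪b g⁻¹, η⟫) cofinite (𝓝 0))
    {K : ℝ} (hK : 0 < K) {F : ℕ → Finset G} (hF : IsControlledFolnerSeq S K F)
    {s : G} (hs : s ∈ S) :
    Tendsto (fun n => ⟪η, π s (((F n).card : ℝ)⁻¹ • ∑ g ∈ F n, b g) + b s -
      ((F n).card : ℝ)⁻¹ • ∑ g ∈ F n, b g⟫) atTop (𝓝 0) := by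
  obtain ⟨hne, hfol, hctl⟩ := hF
  -- The linear term of the growth bound contributes at most `ε * K` by the control condition.
  rw [Metric.tendsto_nhds]
  intro δ hδ
  set ε := δ / (2 * K) with hεdef
  have hε : 0 < ε := by positivity
  obtain ⟨D, hD⟩ : ∃ D, ∀ g, |⟪η, b g⟫| ≤ ε * wordLength S g + D := by
    have hfin : {g | ¬ |⟪η, b g⁻¹⟫| ≤ ε * wordLength S g}.Finite := by
      have : ∀ᶠ g in cofinite, |⟪η, b g⁻¹⟫| ≤ ε * wordLength S g := by
        filter_upwards [Metric.tendsto_nhds.1 hη ε hε,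
          hS.tendsto_wordLength.eventually_gt_atTop 0] with g hg hpos
        rw [dist_zero_right, Real.norm_eq_abs, abs_mul, abs_of_pos (inv_pos.2 hpos), mul_comm,
          ← div_eq_mul_inv, div_lt_iff₀ hpos, real_inner_comm] at hg
        exact hg.le
      exact this
    refine ⟨∑ g ∈ hfin.toFinset, |⟪η, b g⁻¹⟫|, fun g => ?_⟩
    by_cases hg : |⟪η, b g⟫| ≤ ε * wordLength S g
    · have : 0 ≤ ∑ g ∈ hfin.toFinset, |⟪η, b g⁻¹⟫| := Finset.sum_nonneg fun _ _ => abs_nonneg _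
      linarith
    · have hmem : g⁻¹ ∈ hfin.toFinset := by
        simpa [hS.wordLength_inv] using hg
      have := Finset.single_le_sum (f := fun g => |⟪η, b g⁻¹⟫|) (fun _ _ => abs_nonneg _) hmem
      simp only [inv_inv] at this
      have : 0 ≤ ε * wordLength S g := by positivity
      linarith
  have h1 := (hfol s).mul_const (ε + D)
  rw [zero_mul] at h1
  filter_upwards [Metric.tendsto_nhds.1 h1 (δ / 2) (by positivity)] with n hn
  rw [dist_zero_right, Real.norm_eq_abs]
  refine (hb.abs_inner_displacement_le hS (hne n) hs hε.le hD).trans_lt ?_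
  have hsub : ((F n).image (fun h => s * h) \ F n) ∪ (F n \ ((F n).image fun h => s * h)) ⊆
      finsetBoundary S (F n) :=
    Finset.subset_biUnion_of_mem (fun s => ((F n).image (fun h => s * h) \ F n) ∪
      (F n \ ((F n).image fun h => s * h))) hs
  have hr : ((((F n).image (fun h => s * h) \ F n) ∪
      (F n \ ((F n).image fun h => s * h))).card : ℝ) / (F n).card ≤ K / finsetDiam S (F n) :=
    le_trans (by gcongr) (hctl n)
  set r : ℝ := ((((F n).image (fun h => s * h) \ F n) ∪
    (F n \ ((F n).image fun h => s * h))).card : ℝ) / (F n).card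
  -- When the diameter is `0`, the junk value `K / 0 = 0` is harmless.
  have hrK : r * finsetDiam S (F n) ≤ K := by
    rcases (Nat.cast_nonneg (α := ℝ) (finsetDiam S (F n))).eq_or_lt with h0 | h0
    · rw [← h0, mul_zero]
      exact hK.le
    · exact (le_div_iff₀ h0).1 hr
  rw [dist_zero_right, Real.norm_eq_abs] at hn
  have h2 : ε * K = δ / 2 := by
    rw [hεdef]
    field_simp
  have h3 : ε * (r * finsetDiam S (F n)) ≤ ε * K := by gcongr
  have h4 := (le_abs_self _).trans_lt hn
  calc r * (ε * finsetDiam S (F n) + (ε + D))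
      = ε * (r * finsetDiam S (F n)) + r * (ε + D) := by ring
    _ < δ := by linarith

end Averages

/-! ### From weakly almost fixed to almost fixed -/

section Mazur

variable {G H : Type*} [Group G] [NormedAddCommGroup H] [InnerProductSpace ℝ H]
  {S : Finset G} {π : G →* (H ≃ₗᵢ[ℝ] H)} {b : G → H}

/-- Mazur's trick: the displacements `(T_s ξ - ξ)_{s ∈ S}` form a convex subset of the space of
maps `S → H`, so if `0` is in its weak closure then it is in its norm closure. -/
lemma exists_small_displacement [CompleteSpace H] {ξ : ℕ → H}
    (hξ : ∀ η : H, ∀ s ∈ S, Tendsto (fun n => ⟪η, π s (ξ n) + b s - ξ n⟫) atTop (𝓝 0))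
    {ε : ℝ} (hε : 0 < ε) : ∃ ζ : H, ∀ s ∈ S, ‖π s ζ + b s - ζ‖ < ε := by
  classical
  set Φ : H → (S → H) := fun ζ s => π s ζ + b s - ζ with hΦ
  have hconv : Convex ℝ (Set.range Φ) := by
    rintro _ ⟨x, rfl⟩ _ ⟨y, rfl⟩ a c ha hc hac
    refine ⟨a • x + c • y, ?_⟩
    ext s
    simp only [hΦ, map_add, map_smul, Pi.add_apply, Pi.smul_apply]
    have : b s = a • b s + c • b s := by rw [← add_smul, hac, one_smul]
    rw [this]
    simp only [smul_sub, smul_add, ← this]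
    nth_rw 1 [this]
    abel
  have hmem : (0 : S → H) ∈ closure (Set.range Φ) := by
    by_contra h0
    obtain ⟨f, u, hu0, hu⟩ := geometric_hahn_banach_point_closed hconv.closure isClosed_closure h0
    rw [map_zero] at hu0
    have hf : ∀ x : S → H, f x = ∑ s, ⟪(InnerProductSpace.toDual ℝ H).symm
        (f.comp (ContinuousLinearMap.single ℝ (fun _ : S => H) s)), x s⟫ := by
      intro x
      simp only [InnerProductSpace.toDual_symm_apply, ContinuousLinearMap.comp_apply,
        ContinuousLinearMap.single_apply]
      rw [← map_sum, Finset.univ_sum_single]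
    have hlim : Tendsto (fun n => f (Φ (ξ n))) atTop (𝓝 0) := by
      simp_rw [hf]
      simpa using tendsto_finsetSum Finset.univ fun (s : S) _ => hξ
        ((InnerProductSpace.toDual ℝ H).symm
        (f.comp (ContinuousLinearMap.single ℝ (fun _ : S => H) s))) s s.2
    have := ge_of_tendsto' hlim fun n => (hu _ (subset_closure ⟨ξ n, rfl⟩)).le
    linarith
  obtain ⟨_, ⟨ζ, rfl⟩, hζ⟩ := Metric.mem_closure_iff.1 hmem ε hε
  rw [dist_zero_left, pi_norm_lt_iff hε] at hζ
  exact ⟨ζ, fun s hs => hζ ⟨s, hs⟩⟩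

/-- Vectors almost fixed by the generators are almost fixed by the whole group. -/
lemma IsCocycle.tendsto_displacement (hb : IsCocycle π b) (hS : IsSymmGen S) {ξ : ℕ → H}
    (hξ : ∀ s ∈ S, Tendsto (fun k => ‖π s (ξ k) + b s - ξ k‖) atTop (𝓝 0)) (g : G) :
    Tendsto (fun k => ‖π g (ξ k) + b g - ξ k‖) atTop (𝓝 0) := by
  obtain ⟨l, hl, rfl⟩ := hS.exists_list g
  induction l with
  | nil => simp [hb.map_one]
  | cons x l ih =>
    have h1 := ih fun y hy => hl y (by simp [hy])
    have h2 := hξ x (hl x (by simp))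
    refine squeeze_zero (fun _ => norm_nonneg _) (fun k => ?_) (by simpa using h1.add h2)
    have : π (x :: l).prod (ξ k) + b (x :: l).prod - ξ k =
        π x (π l.prod (ξ k) + b l.prod - ξ k) + (π x (ξ k) + b x - ξ k) := by
      rw [List.prod_cons, hb, map_mul, LinearIsometryEquiv.coe_mul, Function.comp_apply, map_sub,
        map_add]
      abel
    rw [this]
    refine (norm_add_le _ _).trans_eq ?_
    rw [LinearIsometryEquiv.norm_map]

end Mazur

/-- **Theorem B.** Let `G` be a finitely generated amenable group admitting a controlled
Følner sequence, `π` an orthogonal representation, and `b` a 1-cocycle for `π` such that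
`∑ g, μ n g · (1/|g|) · ⟪b g⁻¹, ξ⟫ → 0` for all `ξ` and all Reiter sequences `(μ n)`.
Then the affine action `T_g ξ = π g ξ + b g` admits a sequence of almost fixed points. -/
theorem almost_fixed_points_of_right_averaging {G H : Type*} [Group G] [Countable G]
    [DecidableEq G] [NormedAddCommGroup H] [InnerProductSpace ℝ H] [CompleteSpace H]
    (S : Finset G) (hS : IsSymmGen S)
    (hamen : ∃ μ : ℕ → G → ℝ, IsReiterSeq μ)
    (hcf : ∃ K > (0 : ℝ), ∃ F : ℕ → Finset G, IsControlledFolnerSeq S K F)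
    (π : G →* (H ≃ₗᵢ[ℝ] H)) (b : G → H) (hb : IsCocycle π b)
    (havg : ∀ (ξ : H) (μ : ℕ → G → ℝ), IsReiterSeq μ →
      Tendsto (fun n => ∑' g : G, μ n g * ((wordLength S g : ℝ)⁻¹ * ⟪b g⁻¹, ξ⟫))
        atTop (𝓝 0)) :
    ∃ ξ : ℕ → H, ∀ g : G, Tendsto (fun k => ‖π g (ξ k) + b g - ξ k‖) atTop (𝓝 0) := by
  obtain ⟨K, hK, F, hF⟩ := hcf
  have hweak : ∀ η : H, Tendsto (fun g => (wordLength S g : ℝ)⁻¹ * ⟪b g⁻¹, η⟫) cofinite (𝓝 0) :=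
    fun η => tendsto_cofinite_of_reiter (hb.abs_quotient_le hS η) (hb.tendsto_quotient_sub hS η)
      hamen (havg η)
  have hsmall : ∀ k : ℕ, ∃ ζ : H, ∀ s ∈ S, ‖π s ζ + b s - ζ‖ < 1 / ((k : ℝ) + 1) := fun k =>
    exists_small_displacement
      (fun η s hs => hb.tendsto_inner_displacement hS (hweak η) hK hF hs) Nat.one_div_pos_of_nat
  choose ξ hξ using hsmall
  refine ⟨ξ, hb.tendsto_displacement hS fun s hs => ?_⟩
  exact squeeze_zero (fun _ => norm_nonneg _) (fun k => (hξ k s hs).le)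
    tendsto_one_div_add_atTop_nhds_zero_nat
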